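/- arXiv:1609.06651 — 11 statements merged into one kernel-verified Lean document; each statement's English description precedes it below -/
import Mathlib

section
/- Let $n$ be a positive integer, $p \in (0,1)$, and let $X$ be a binomial random variable with parameters $n$ and $p$. If $k$ is a positive integer with $np < k \le n$, then the tail conditional expectation satisfies $\mathbb{E}[X \mid X \ge k] \le k + \frac{(n-k)p}{k - np + p}$. -/
/-- The binomial probability mass function: `P[Bin(n,p) = i] = C(n,i) p^i (1-p)^(n-i)`. -/
noncomputable def binPMF (n : ℕ) (p : ℝ) (i : ℕ) : ℝ :=
  (n.choose i : ℝ) * p ^ i * (1 - p) ^ (n - i)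

/-- The binomial tail probability `P[Bin(n,p) ≥ k]`. -/
noncomputable def binTail (n : ℕ) (p : ℝ) (k : ℕ) : ℝ :=
  ∑ i ∈ Finset.Icc k n, binPMF n p i

/-- The tail conditional expectation `E[Bin(n,p) | Bin(n,p) ≥ k]`,
i.e. `E[X · 1_{X ≥ k}] / P[X ≥ k]`. -/
noncomputable def binTCE (n : ℕ) (p : ℝ) (k : ℕ) : ℝ :=
  (∑ i ∈ Finset.Icc k n, (i : ℝ) * binPMF n p i) / binTail n p k

lemma binPMF_step (n i : ℕ) (p : ℝ) (hi : i ≤ n) :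
    ((i:ℝ) + 1) * (1 - p) * binPMF n p (i+1) = ((n:ℝ) - i) * p * binPMF n p i := by
  unfold binPMF
  rcases hi.eq_or_lt with rfl | h
  · simp
  · obtain ⟨d, rfl⟩ := Nat.exists_eq_add_of_lt h
    have h1 : i + d + 1 - i = d + 1 := by omega
    have h2 : i + d + 1 - (i + 1) = d := by omega
    have h3 := Nat.choose_succ_right_eq (i+d+1) i
    rw [h1] at h3
    have h4 : (((i+d+1).choose (i+1) : ℕ):ℝ) * ((i:ℝ)+1) = ((i+d+1).choose i : ℕ) * ((d:ℝ)+1) := by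
      exact_mod_cast h3
    rw [h1, h2]
    push_cast
    linear_combination (1-p) * p^(i+1) * (1-p)^d * h4

lemma tele (g : ℕ → ℝ) (k n : ℕ) (h : k ≤ n) :
    ∑ i ∈ Finset.Icc k n, (g (i+1) - g i) = g (n+1) - g k := by
  induction n, h using Nat.le_induction with
  | base => simp
  | succ m hm ih => rw [Finset.sum_Icc_succ_top (by omega), ih]; ring

theorem binomial_tail_conditional_expectation_upper_bound
    (n k : ℕ) (p : ℝ) (hn : 0 < n) (hp : 0 < p) (hp1 : p < 1)
    (hk : 0 < k) (hlow : (n : ℝ) * p < k) (hkn : k ≤ n) :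
    binTCE n p k ≤ (k : ℝ) + ((n : ℝ) - k) * p / ((k : ℝ) - n * p + p) := by
  have hq : 0 < 1 - p := by linarith
  have hf : ∀ i, 0 ≤ binPMF n p i := fun i => by unfold binPMF; positivity
  have hT : 0 < binTail n p k := by
    unfold binTail
    refine Finset.sum_pos (fun i hi => ?_) ⟨k, by simp [hkn]⟩
    have hc : 0 < n.choose i := Nat.choose_pos (Finset.mem_Icc.1 hi).2
    unfold binPMF
    positivity
  have hD : 0 < (k : ℝ) - n * p + p := by linarith
  have hz : binPMF n p (n+1) = 0 := by simp [binPMF]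
  have h0 := tele (fun i => ((i:ℝ) - k) * (i * (1-p) * binPMF n p i)) k n hkn
  simp only [hz, sub_self, zero_mul, mul_zero] at h0
  have h1 : ∑ i ∈ Finset.Icc k n, (((n:ℝ) - k) * p * binPMF n p i
      - ((k : ℝ) - n * p + p) * (i * binPMF n p i - k * binPMF n p i)) ≥ 0 := by
    rw [ge_iff_le, ← h0]
    refine Finset.sum_le_sum (fun i hi => ?_)
    have h2 := binPMF_step n i p (Finset.mem_Icc.1 hi).2
    push_cast
    rw [h2]
    have := mul_nonneg (sq_nonneg ((i:ℝ) - k)) (hf i)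
    nlinarith
  rw [Finset.sum_sub_distrib, ← Finset.mul_sum, ← Finset.mul_sum, Finset.sum_sub_distrib,
    ← Finset.mul_sum] at h1
  change ((n:ℝ) - k) * p * binTail n p k - ((k : ℝ) - n * p + p) *
    (_ - k * binTail n p k) ≥ 0 at h1
  unfold binTCE
  rw [div_le_iff₀ hT, add_mul, div_mul_eq_mul_div, ← sub_le_iff_le_add', le_div_iff₀ hD]
  linarith
end

section
/- Let $n$ be a positive integer, $p \in (0,1)$, and let $X$ be a binomial random variable with parameters $n$ and $p$. If $k$ is a positive integer with $np < k \le n-1$, and $\ell := \lfloor \frac{k - np}{1-p} \rfloor$ (so $\ell < k$), then $\mathbb{P}[X \ge k] \ge \frac{p^{2(\ell+1)}}{2} \cdot \binom{n}{\ell+1} \big/ \binom{k}{\ell+1}$. -/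
lemma binPMF_nonneg' (n : ℕ) (p : ℝ) (h0 : 0 ≤ p) (h1 : p ≤ 1) (i : ℕ) : 0 ≤ binPMF n p i := by
  unfold binPMF
  have : 0 ≤ 1 - p := by linarith
  positivity

lemma binTail_nonneg' (n : ℕ) (p : ℝ) (h0 : 0 ≤ p) (h1 : p ≤ 1) (k : ℕ) : 0 ≤ binTail n p k :=
  Finset.sum_nonneg fun i _ => binPMF_nonneg' n p h0 h1 i

lemma binPMF_total (n : ℕ) (p : ℝ) : ∑ i ∈ Finset.range (n + 1), binPMF n p i = 1 := by
  have h := add_pow p (1 - p) n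
  rw [add_sub_cancel, one_pow] at h
  rw [h]
  refine Finset.sum_congr rfl fun i _ => ?_
  unfold binPMF; ring

lemma binTail_split (n a : ℕ) (p : ℝ) (ha : a ≤ n + 1) :
    ∑ i ∈ Finset.range a, binPMF n p i + binTail n p a = 1 := by
  rw [← binPMF_total n p, binTail, ← Finset.sum_range_add_sum_Ico _ ha]
  rfl

lemma binTail_succ (n k : ℕ) (p : ℝ) (h0 : 0 ≤ p) (h1 : p ≤ 1) :
    p * binTail n p k ≤ binTail (n + 1) p (k + 1) := by
  unfold binTail
  rw [← Finset.map_add_right_Icc k n 1, Finset.sum_map, Finset.mul_sum]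
  refine Finset.sum_le_sum fun i _ => ?_
  simp only [addRightEmbedding_apply, binPMF]
  rw [Nat.add_sub_add_right, pow_succ]
  have : (n.choose i : ℝ) ≤ ((n+1).choose (i+1) : ℝ) := by
    rw [Nat.choose_succ_succ]; push_cast
    have : (0:ℝ) ≤ n.choose (i+1) := by positivity
    linarith
  have hq : 0 ≤ 1 - p := by linarith
  have h2 : 0 ≤ p ^ i * p * (1-p)^(n-i) := by positivity
  nlinarith [mul_le_mul_of_nonneg_right this h2]

lemma binTail_add (n k j : ℕ) (p : ℝ) (h0 : 0 ≤ p) (h1 : p ≤ 1) :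
    p ^ j * binTail n p k ≤ binTail (n + j) p (k + j) := by
  induction j with
  | zero => simp
  | succ j ih =>
    refine le_trans ?_ (binTail_succ (n + j) (k + j) p h0 h1)
    rw [pow_succ]
    nlinarith [mul_le_mul_of_nonneg_left ih h0]

lemma binTail_step (m a : ℕ) (p : ℝ) (h : a ≤ m) :
    binTail m p a = binPMF m p a + binTail m p (a + 1) := by
  unfold binTail
  rw [← Finset.insert_Icc_succ_left_eq_Icc h, Finset.sum_insert (by simp)]
  rfl

lemma binTail_hasDeriv (m d : ℕ) : ∀ a : ℕ, a + d = m + 1 → 1 ≤ a → ∀ p : ℝ,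
    HasDerivAt (fun p => binTail m p a)
      (a * (m.choose a : ℝ) * p ^ (a - 1) * (1 - p) ^ (m - a)) p := by
  induction d with
  | zero =>
    intro a h1 h2 p
    have : a = m + 1 := by omega
    subst this
    simp [binTail, Nat.choose_succ_self]
    exact hasDerivAt_const _ _
  | succ d ih =>
    intro a h1 h2 p
    have ham : a ≤ m := by omega
    have hfun : (fun p => binTail m p a) = fun p => binPMF m p a + binTail m p (a + 1) := by
      funext p; exact binTail_step m a p ham
    rw [hfun]
    have hd := ih (a + 1) (by omega) (by omega) p
    have h3 : HasDerivAt (fun p : ℝ => binPMF m p a)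
        ((m.choose a : ℝ) * (a * p ^ (a - 1)) * (1 - p) ^ (m - a) +
          (m.choose a : ℝ) * p ^ a * (((m - a : ℕ) : ℝ) * (1 - p) ^ (m - a - 1) * (-1))) p := by
      unfold binPMF
      have e1 : HasDerivAt (fun p : ℝ => (m.choose a : ℝ) * p ^ a)
        ((m.choose a : ℝ) * (a * p ^ (a - 1))) p := (hasDerivAt_pow a p).const_mul _
      have e2 : HasDerivAt (fun p : ℝ => (1 - p) ^ (m - a))
        (((m - a : ℕ) : ℝ) * (1 - p) ^ (m - a - 1) * (-1)) p :=
        ((hasDerivAt_id p).const_sub 1).pow (m - a)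
      exact e1.mul e2
    refine (h3.add hd).congr_deriv ?_
    have h4 : ((m.choose (a+1) : ℕ) : ℝ) * ((a + 1 : ℕ) : ℝ) = m.choose a * ((m - a : ℕ) : ℝ) := by
      exact_mod_cast Nat.choose_succ_right_eq m a
    rw [Nat.add_sub_cancel, Nat.sub_sub]
    linear_combination (p ^ a * (1 - p) ^ (m - (a + 1))) * h4

lemma log_key (p q x : ℝ) (hx : 0 < x) (hxq : x < q) (hqp : q ≤ p) :
    p * (Real.log (p + x) - Real.log (p - x)) ≤ q * (Real.log (q + x) - Real.log (q - x)) := by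
  have hser : ∀ r : ℝ, x < r → HasSum (fun k : ℕ => r * (2 * (1 / (2 * (k:ℝ) + 1)) * (x / r) ^ (2 * k + 1)))
      (r * (Real.log (r + x) - Real.log (r - x))) := by
    intro r hr
    have hr0 : 0 < r := hx.trans hr
    have h : |x / r| < 1 := by
      rw [abs_of_pos (by positivity), div_lt_one hr0]; exact hr
    have := (Real.hasSum_log_sub_log_of_abs_lt_one h).mul_left r
    have e1 : 1 + x / r = (r + x) / r := by field_simp
    have e2 : 1 - x / r = (r - x) / r := by field_simp
    rw [e1, e2, Real.log_div (by linarith) hr0.ne', Real.log_div (by linarith) hr0.ne',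
      sub_sub_sub_cancel_right] at this
    exact this
  refine hasSum_le ?_ (hser p (by linarith)) (hser q hxq)
  intro k
  have hq0 : 0 < q := hx.trans hxq
  have hp0 : 0 < p := by linarith
  have e : ∀ r : ℝ, 0 < r → r * (2 * (1 / (2 * (k:ℝ) + 1)) * (x / r) ^ (2 * k + 1)) =
      2 * (1 / (2 * (k:ℝ) + 1)) * x * (x / r) ^ (2 * k) := by
    intro r hr
    rw [pow_succ]; field_simp
  rw [e p hp0, e q hq0]
  gcongr

lemma half_big (m a : ℕ) (p : ℝ) (ha : 1 ≤ a) (ham : a < m) (hp : (a : ℝ) = m * p)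
    (hhalf : 1 - p ≤ p) : 1 / 2 ≤ binTail m p a := by
  have hm : (0:ℝ) < m := by exact_mod_cast (by omega : 0 < m)
  have hp1 : p < 1 := by
    have : (a:ℝ) < m := by exact_mod_cast ham
    nlinarith
  have hc : ((m - a : ℕ) : ℝ) = m * (1 - p) := by
    rw [Nat.cast_sub ham.le, hp]; ring
  have hD := binTail_hasDeriv m (m + 1 - a) a (by omega) ha
  have hH : ∀ x : ℝ, HasDerivAt (fun x => binTail m (p + x) a + binTail m (p - x) a)
      ((a * (m.choose a : ℝ) * (p + x) ^ (a - 1) * (1 - (p + x)) ^ (m - a)) * 1 +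
       (a * (m.choose a : ℝ) * (p - x) ^ (a - 1) * (1 - (p - x)) ^ (m - a)) * (-1)) x := by
    intro x
    exact ((hD (p + x)).comp x ((hasDerivAt_id x).const_add p)).add
      ((hD (p - x)).comp x ((hasDerivAt_id x).const_sub p))
  have hanti : AntitoneOn (fun x => binTail m (p + x) a + binTail m (p - x) a)
      (Set.Icc 0 (1 - p)) := by
    apply antitoneOn_of_deriv_nonpos (convex_Icc _ _)
    · exact fun x _ => (hH x).continuousAt.continuousWithinAt
    · exact fun x _ => (hH x).differentiableAt.differentiableWithinAt
    · intro x hx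
      rw [interior_Icc] at hx
      obtain ⟨hx0, hxq⟩ := hx
      rw [(hH x).deriv]
      have hk := log_key p (1 - p) x hx0 hxq hhalf
      have hpx : 0 < p - x := by linarith
      have hpx' : 0 < p + x := by linarith
      have hqx : 0 < 1 - p - x := by linarith
      have hqx' : 0 < 1 - p + x := by linarith
      have h1 : (p + x) ^ a * (1 - p - x) ^ (m - a) ≤ (p - x) ^ a * (1 - p + x) ^ (m - a) := by
        rw [← Real.log_le_log_iff (by positivity) (by positivity),
          Real.log_mul (by positivity) (by positivity), Real.log_mul (by positivity) (by positivity),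
          Real.log_pow, Real.log_pow, Real.log_pow, Real.log_pow, hc, hp]
        nlinarith [mul_le_mul_of_nonneg_left hk hm.le]
      obtain ⟨b, rfl⟩ : ∃ b, a = b + 1 := ⟨a - 1, by omega⟩
      have h2 : (p + x) ^ b * (1 - p - x) ^ (m - (b+1)) ≤ (p - x) ^ b * (1 - p + x) ^ (m - (b+1)) := by
        have h3 : (p - x) ^ b * (1 - p + x) ^ (m - (b+1)) * (p - x) ≤
            (p - x) ^ b * (1 - p + x) ^ (m - (b+1)) * (p + x) := by
          gcongr; linarith
        rw [pow_succ, pow_succ] at h1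
        refine le_of_mul_le_mul_right ?_ hpx'
        linarith
      have h4 : (0:ℝ) ≤ ((b+1 : ℕ):ℝ) * (m.choose (b+1) : ℝ) := by positivity
      have h5 := mul_le_mul_of_nonneg_left h2 h4
      have e1 : 1 - (p + x) = 1 - p - x := by ring
      have e2 : 1 - (p - x) = 1 - p + x := by ring
      rw [e1, e2, Nat.add_sub_cancel]
      linarith
  have hq : 0 ≤ 1 - p := by linarith
  have h := hanti (Set.left_mem_Icc.2 hq) (Set.right_mem_Icc.2 hq) hq
  simp only [add_zero, sub_zero, add_sub_cancel] at h
  have h0 := binTail_nonneg' m (p - (1 - p)) (by linarith) (by linarith) a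
  have h1 : binTail m 1 a = 1 := by
    have := binTail_split m a 1 (by omega)
    rw [Finset.sum_eq_zero, zero_add] at this
    · exact this
    · intro i hi
      have : i < a := Finset.mem_range.1 hi
      unfold binPMF
      rw [sub_self, zero_pow (by omega), mul_zero]
  linarith

lemma choose_pair (m a : ℕ) (ha : 2 * a ≤ m) (i : ℕ) (hi : i < a) :
    m.choose (a - 1 - i) * (m - a) ^ (2 * i + 1) ≤ m.choose (a + i) * a ^ (2 * i + 1) := by
  obtain ⟨c, rfl⟩ : ∃ c, m = a + c := ⟨m - a, by omega⟩
  rw [Nat.add_sub_cancel_left]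
  induction i with
  | zero =>
    have h := Nat.choose_succ_right_eq (a + c) (a - 1)
    rw [show a - 1 + 1 = a by omega, show a + c - (a - 1) = c + 1 by omega] at h
    simp only [Nat.sub_zero, mul_zero, zero_add, pow_one, add_zero]
    nlinarith
  | succ i ih =>
    have ih := ih (by omega)
    obtain ⟨b, rfl⟩ : ∃ b, a = b + 1 + i + 1 := ⟨a - 2 - i, by omega⟩
    have h1 := Nat.choose_succ_right_eq (b + 1 + i + 1 + c) b
    have h2 := Nat.choose_succ_right_eq (b + 1 + i + 1 + c) (b + 1 + i + 1 + i)
    rw [show b + 1 + i + 1 - 1 - i = b + 1 by omega] at ih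
    rw [show b + 1 + i + 1 - 1 - (i + 1) = b by omega]
    obtain ⟨e, rfl⟩ : ∃ e, c = i + e := ⟨c - i, by omega⟩
    rw [show b + 1 + i + 1 + (i + e) - b = 2 * i + e + 2 by omega] at h1
    rw [show b + 1 + i + 1 + (i + e) - (b + 1 + i + 1 + i) = e by omega] at h2
    rw [show b + 1 + i + 1 + (i + 1) = b + 1 + i + 1 + i + 1 by omega]
    set M := b + 1 + i + 1 + (i + e)
    set A := b + 1 + i + 1 with hA
    set C := i + e with hC
    have hpos : 0 < (2 * i + e + 2) * (A + i + 1) := by positivity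
    refine Nat.le_of_mul_le_mul_left ?_ hpos
    have key : (b + 1) * (A + i + 1) * C ^ 2 ≤ (2 * i + e + 2) * e * A ^ 2 := by
      have hAC : A ≤ C := by omega
      have hAb : (b : ℤ) + 1 = A - (i + 1) := by omega
      have hCe : (e : ℤ) = C - i := by omega
      zify at hAC ⊢
      rw [hAb, hCe]
      have hA0 : (0:ℤ) ≤ A := by positivity
      have h5 : (0:ℤ) ≤ (C:ℤ) ^ 2 - A ^ 2 := by nlinarith
      have h6 : (0:ℤ) ≤ ((i:ℤ) + 1) ^ 2 * ((C:ℤ) ^ 2 - A ^ 2) := by positivity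
      have h7 : (0:ℤ) ≤ (2 * (C:ℤ) + 1) * (A:ℤ) ^ 2 := by positivity
      linarith
    calc (2 * i + e + 2) * (A + i + 1) * (M.choose b * C ^ (2 * (i + 1) + 1))
        = (M.choose b * (2 * i + e + 2)) * (A + i + 1) * C ^ 2 * C ^ (2 * i + 1) := by ring
      _ = (M.choose (b + 1) * C ^ (2 * i + 1)) * ((b + 1) * (A + i + 1) * C ^ 2) := by rw [← h1]; ring
      _ ≤ (M.choose (A + i) * A ^ (2 * i + 1)) * ((2 * i + e + 2) * e * A ^ 2) :=
          Nat.mul_le_mul ih key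
      _ = (M.choose (A + i) * e) * (2 * i + e + 2) * A ^ 2 * A ^ (2 * i + 1) := by ring
      _ = _ := by rw [← h2]; ring

lemma half_small (m a : ℕ) (p : ℝ) (ha : 1 ≤ a) (hp : (a : ℝ) = m * p) (hp0 : 0 < p)
    (hhalf : p ≤ 1 - p) : 1 / 2 ≤ binTail m p a := by
  have hm : (0:ℝ) < m := by
    have : (0:ℝ) < a := by exact_mod_cast ha
    by_contra h
    nlinarith
  have ham : 2 * a ≤ m := by
    have : (2 * a : ℝ) ≤ m := by nlinarith
    exact_mod_cast this
  have hc : ((m - a : ℕ) : ℝ) = m * (1 - p) := by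
    rw [Nat.cast_sub (by omega), hp]; ring
  have hs := binTail_split m a p (by omega)
  suffices h : ∑ i ∈ Finset.range a, binPMF m p i ≤ binTail m p a by linarith
  rw [← Finset.sum_range_reflect]
  calc ∑ i ∈ Finset.range a, binPMF m p (a - 1 - i)
      ≤ ∑ i ∈ Finset.range a, binPMF m p (a + i) := by
        refine Finset.sum_le_sum fun i hi => ?_
        have hi : i < a := Finset.mem_range.1 hi
        have h := choose_pair m a ham i hi
        have h' : (m.choose (a - 1 - i) : ℝ) * ((m - a : ℕ) : ℝ) ^ (2 * i + 1) ≤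
            m.choose (a + i) * (a : ℝ) ^ (2 * i + 1) := by exact_mod_cast h
        rw [hc, hp, mul_pow, mul_pow] at h'
        have h2 : (m.choose (a - 1 - i) : ℝ) * (1 - p) ^ (2 * i + 1) ≤
            m.choose (a + i) * p ^ (2 * i + 1) := by
          have : (0:ℝ) < (m:ℝ) ^ (2 * i + 1) := by positivity
          refine le_of_mul_le_mul_left ?_ this
          linarith
        unfold binPMF
        have e1 : m - (a - 1 - i) = (2 * i + 1) + (m - (a + i)) := by omega
        have e2 : p ^ (a + i) = p ^ (a - 1 - i) * p ^ (2 * i + 1) := by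
          rw [← pow_add]; congr 1; omega
        rw [e1, e2, pow_add]
        have hq : 0 ≤ 1 - p := by linarith
        have h3 : 0 ≤ p ^ (a - 1 - i) * (1 - p) ^ (m - (a + i)) := by positivity
        have := mul_le_mul_of_nonneg_left h2 h3
        linarith
    _ = ∑ i ∈ Finset.Ico a (a + a), binPMF m p i := by
        rw [Finset.sum_Ico_eq_sum_range, Nat.add_sub_cancel]
    _ ≤ binTail m p a := by
        refine Finset.sum_le_sum_of_subset_of_nonneg ?_ fun i _ _ =>
          binPMF_nonneg' m p hp0.le (by linarith) i
        intro i hi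
        simp only [Finset.mem_Ico, Finset.mem_Icc] at *
        omega

lemma half_all (m a : ℕ) (p : ℝ) (hp : 0 < p) (hp1 : p < 1) (h : (a : ℝ) < m * p) :
    1 / 2 ≤ binTail m p a := by
  rcases Nat.eq_zero_or_pos a with rfl | ha
  · have := binTail_split m 0 p (by omega)
    simp only [Finset.range_zero, Finset.sum_empty, zero_add] at this
    rw [this]; norm_num
  have ha0 : (0:ℝ) < a := by exact_mod_cast ha
  have hm : (0:ℝ) < m := by
    by_contra h
    nlinarith
  have ham : a < m := by
    have : (a:ℝ) < m := by nlinarith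
    exact_mod_cast this
  have hle : (a:ℝ) / m ≤ p := by rw [div_le_iff₀ hm]; linarith
  have heq : (a:ℝ) = m * (a / m) := by field_simp
  have hr0 : (0:ℝ) < a / m := by positivity
  have hD := binTail_hasDeriv m (m + 1 - a) a (by omega) ha
  have hmono : MonotoneOn (fun x => binTail m x a) (Set.Icc 0 1) := by
    apply monotoneOn_of_deriv_nonneg (convex_Icc _ _)
    · exact fun x _ => (hD x).continuousAt.continuousWithinAt
    · exact fun x _ => (hD x).differentiableAt.differentiableWithinAt
    · intro x hx
      rw [interior_Icc] at hx
      obtain ⟨hx0, hxq⟩ := hx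
      rw [(hD x).deriv]
      have : 0 < 1 - x := by linarith
      positivity
  refine le_trans ?_ (hmono ⟨hr0.le, by linarith⟩ ⟨hp.le, hp1.le⟩ hle)
  rcases le_total (1 - (a:ℝ)/m) (a/m) with h1 | h1
  · exact half_big m a _ ha ham heq h1
  · exact half_small m a _ ha heq hr0 h1

lemma choose_ratio (n k : ℕ) (p : ℝ) (hp : 0 < p) (hkn : k ≤ n) : ∀ j : ℕ, j ≤ k →
    (∀ i < j, ((n : ℝ) - i) * p ≤ k - i) →
    (n.choose j : ℝ) * p ^ j ≤ k.choose j := by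
  intro j
  induction j with
  | zero => intro _ _; simp
  | succ j ih =>
    intro hj h
    have ih := ih (by omega) fun i hi => h i (by omega)
    have h1 : ((n.choose (j+1) : ℕ) : ℝ) * ((j + 1 : ℕ) : ℝ) = n.choose j * ((n - j : ℕ) : ℝ) := by
      exact_mod_cast Nat.choose_succ_right_eq n j
    have h2 : ((k.choose (j+1) : ℕ) : ℝ) * ((j + 1 : ℕ) : ℝ) = k.choose j * ((k - j : ℕ) : ℝ) := by
      exact_mod_cast Nat.choose_succ_right_eq k j
    have h3 := h j (by omega)
    rw [← Nat.cast_sub (by omega), ← Nat.cast_sub (by omega)] at h3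
    have hpos : (0:ℝ) < ((j + 1 : ℕ) : ℝ) := by positivity
    refine le_of_mul_le_mul_right ?_ hpos
    have h4 := mul_le_mul ih h3 (by positivity) (by positivity)
    rw [h2, pow_succ]
    calc _ = ((n.choose (j+1) : ℕ) : ℝ) * ((j + 1 : ℕ) : ℝ) * p ^ j * p := by ring
      _ = _ := by rw [h1]
      _ ≤ _ := by linarith

theorem binomial_tail_lower_bound
    (n k : ℕ) (p : ℝ) (hn : 0 < n) (hp : 0 < p) (hp1 : p < 1)
    (hk : 0 < k) (hlow : (n : ℝ) * p < k) (hkn : k ≤ n - 1)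
    (ℓ : ℕ) (hℓ : ℓ = ⌊((k : ℝ) - n * p) / (1 - p)⌋₊) :
    binTail n p k ≥
      p ^ (2 * (ℓ + 1)) / 2 * ((n.choose (ℓ + 1) : ℝ) / (k.choose (ℓ + 1) : ℝ)) := by
  have hq : 0 < 1 - p := by linarith
  have hkn' : (k:ℝ) < n := by exact_mod_cast (by omega : k < n)
  have hA : (ℓ:ℝ) * (1 - p) ≤ k - n * p := by
    rw [← le_div_iff₀ hq, hℓ]
    exact Nat.floor_le (div_nonneg (by linarith) hq.le)
  have hB : (k:ℝ) - n * p < (ℓ + 1) * (1 - p) := by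
    rw [← div_lt_iff₀ hq, hℓ]
    exact Nat.lt_floor_add_one _
  have hlk : ℓ < k := by
    have : (ℓ:ℝ) < k := by nlinarith
    exact_mod_cast this
  have hratio := choose_ratio n k p hp (by omega) (ℓ + 1) hlk (by
    intro i hi
    have : (i:ℝ) ≤ ℓ := by exact_mod_cast (by omega : i ≤ ℓ)
    nlinarith)
  have hhalf := half_all (n - (ℓ + 1)) (k - (ℓ + 1)) p hp hp1 (by
    rw [Nat.cast_sub (by omega), Nat.cast_sub (by omega)]
    push_cast
    nlinarith)
  have hadd := binTail_add (n - (ℓ + 1)) (k - (ℓ + 1)) (ℓ + 1) p hp.le hp1.le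
  rw [Nat.sub_add_cancel (by omega), Nat.sub_add_cancel (by omega)] at hadd
  have hpj : 0 < p ^ (ℓ + 1) := by positivity
  have hck : (0:ℝ) < k.choose (ℓ + 1) := by exact_mod_cast Nat.choose_pos hlk
  have h1 : p ^ (ℓ + 1) * (1 / 2) ≤ binTail n p k :=
    le_trans (mul_le_mul_of_nonneg_left hhalf hpj.le) hadd
  refine le_trans ?_ h1
  have h2 : (n.choose (ℓ + 1) : ℝ) * p ^ (ℓ + 1) / k.choose (ℓ + 1) ≤ 1 := by
    rw [div_le_one hck]; exact hratio
  calc _ = p ^ (ℓ + 1) * (1/2) * ((n.choose (ℓ + 1) : ℝ) * p ^ (ℓ + 1) / k.choose (ℓ + 1)) := by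
        ring
    _ ≤ p ^ (ℓ + 1) * (1/2) * 1 := by gcongr
    _ = _ := by ring
end

section
/- Let $\mu > 0$ and let $Y$ be a Poisson random variable with mean $\mu$. If $k$ is a positive integer with $k \ge \mu$, and $\ell := \lfloor k - \mu \rfloor$, then $\mathbb{P}[Y \ge k] \ge \frac{1}{2} \left( \frac{\mu}{k + \mu} \right)^{\ell + 1}$. -/
/-- The Poisson probability mass function: `P[Poi(μ) = i] = exp(-μ) μ^i / i!`. -/
noncomputable def poiPMF (μ : ℝ) (i : ℕ) : ℝ :=
  Real.exp (-μ) * μ ^ i / (Nat.factorial i : ℝ)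

/-- The Poisson tail probability `P[Poi(μ) ≥ k]`. -/
noncomputable def poiTail (μ : ℝ) (k : ℕ) : ℝ :=
  ∑' j : ℕ, poiPMF μ (k + j)

/-- The tail conditional expectation `E[Poi(μ) | Poi(μ) ≥ k]`,
i.e. `E[Y · 1_{Y ≥ k}] / P[Y ≥ k]`. -/
noncomputable def poiTCE (μ : ℝ) (k : ℕ) : ℝ :=
  (∑' j : ℕ, ((k + j : ℕ) : ℝ) * poiPMF μ (k + j)) / poiTail μ k

lemma aux_summable (μ : ℝ) (k : ℕ) : Summable (fun j => poiPMF μ (k + j)) := by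
  have h : Summable (fun j => poiPMF μ j) := by
    have := (Real.summable_pow_div_factorial μ).mul_left (Real.exp (-μ))
    refine this.congr fun j => ?_
    unfold poiPMF
    rw [mul_div_assoc]
  have h2 := (summable_nat_add_iff k).2 h
  simpa [add_comm] using h2

lemma aux_pos (μ : ℝ) (hμ : 0 < μ) (i : ℕ) : 0 < poiPMF μ i := by
  unfold poiPMF; positivity

lemma aux_zero (μ : ℝ) : poiTail μ 0 = 1 := by
  have h := (NormedSpace.expSeries_div_hasSum_exp μ).mul_left (Real.exp (-μ))
  rw [← Real.exp_eq_exp_ℝ, ← Real.exp_add, neg_add_cancel, Real.exp_zero] at h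
  unfold poiTail
  rw [← h.tsum_eq]
  refine tsum_congr fun j => ?_
  unfold poiPMF
  rw [zero_add, mul_div_assoc]

lemma aux_rec (μ : ℝ) (k : ℕ) : poiTail μ k = poiPMF μ k + poiTail μ (k + 1) := by
  unfold poiTail
  rw [(aux_summable μ k).tsum_eq_zero_add, add_zero]
  congr 1
  refine tsum_congr fun j => ?_
  congr 1
  ring

lemma aux_split (μ : ℝ) (n : ℕ) : ∑ i ∈ Finset.range n, poiPMF μ i + poiTail μ n = 1 := by
  induction n with
  | zero => simp [aux_zero]
  | succ n ih =>
    rw [aux_rec] at ih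
    rw [Finset.sum_range_succ]; linarith

lemma aux_fact (n j : ℕ) (h : j < n) :
    (n + j).factorial ≤ n ^ (2 * j + 1) * (n - 1 - j).factorial := by
  induction j with
  | zero =>
    obtain ⟨m, rfl⟩ : ∃ m, n = m + 1 := ⟨n - 1, by omega⟩
    simp [Nat.factorial_succ]
  | succ j ih =>
    have ih := ih (by omega)
    obtain ⟨m, rfl⟩ : ∃ m, n = m + j + 2 := ⟨n - j - 2, by omega⟩
    have e1 : m + j + 2 - 1 - j = m + 1 := by omega
    have e2 : m + j + 2 - 1 - (j + 1) = m := by omega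
    rw [e1, Nat.factorial_succ] at ih
    rw [e2, ← add_assoc, Nat.factorial_succ]
    have h3 : (m + j + 2 + j + 1) * (m + 1) ≤ (m + j + 2) ^ 2 := by nlinarith [Nat.zero_le (j*j), Nat.zero_le (j*m)]
    calc _ ≤ (m + j + 2 + j + 1) * ((m + j + 2) ^ (2 * j + 1) * ((m + 1) * m.factorial)) :=
          Nat.mul_le_mul_left _ ih
      _ = ((m + j + 2 + j + 1) * (m + 1)) * ((m + j + 2) ^ (2 * j + 1) * m.factorial) := by ring
      _ ≤ (m + j + 2) ^ 2 * ((m + j + 2) ^ (2 * j + 1) * m.factorial) := Nat.mul_le_mul_right _ h3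
      _ = _ := by ring

lemma aux_pair (μ : ℝ) (hμ : 0 < μ) (n j : ℕ) (hn : (n : ℝ) ≤ μ) (h : j < n) :
    poiPMF μ (n - 1 - j) ≤ poiPMF μ (n + j) := by
  have hf : ((n + j).factorial : ℝ) ≤ (n : ℝ) ^ (2 * j + 1) * ((n - 1 - j).factorial : ℝ) := by
    exact_mod_cast aux_fact n j h
  have hp : (n : ℝ) ^ (2 * j + 1) ≤ μ ^ (2 * j + 1) := by gcongr
  have hf2 : ((n + j).factorial : ℝ) ≤ μ ^ (2 * j + 1) * ((n - 1 - j).factorial : ℝ) :=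
    hf.trans (by gcongr)
  have e : μ ^ (n + j) = μ ^ (n - 1 - j) * μ ^ (2 * j + 1) := by
    rw [← pow_add]; congr 1; omega
  unfold poiPMF
  rw [div_le_div_iff₀ (by positivity) (by positivity), e]
  calc _ ≤ Real.exp (-μ) * μ ^ (n - 1 - j) * (μ ^ (2 * j + 1) * ((n - 1 - j).factorial : ℝ)) := by
        gcongr
    _ = _ := by ring

lemma aux_half (μ : ℝ) (hμ : 0 < μ) (n : ℕ) (hn : (n : ℝ) ≤ μ) : 1 / 2 ≤ poiTail μ n := by
  have h1 : ∑ i ∈ Finset.range n, poiPMF μ i ≤ poiTail μ n := by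
    rw [← Finset.sum_range_reflect]
    calc _ ≤ ∑ j ∈ Finset.range n, poiPMF μ (n + j) :=
          Finset.sum_le_sum fun j hj => aux_pair μ hμ n j hn (Finset.mem_range.1 hj)
      _ ≤ _ := (aux_summable μ n).sum_le_tsum _ fun i _ => (aux_pos μ hμ _).le
  have := aux_split μ n
  linarith

lemma aux_step (μ : ℝ) (hμ : 0 < μ) (j k : ℕ) (hj : j + 1 ≤ k) :
    poiTail μ j * (μ / ((k : ℝ) + μ)) ≤ poiTail μ (j + 1) := by
  have hjk : (j : ℝ) + 1 ≤ k := by exact_mod_cast hj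
  have hk : (0 : ℝ) < k := by have := Nat.cast_nonneg (α := ℝ) j; linarith
  have h2 : 0 ≤ poiTail μ (j + 1 + 1) := tsum_nonneg fun i => (aux_pos μ hμ _).le
  have h1 := aux_rec μ (j + 1)
  have h3 : poiPMF μ (j + 1) * ((j : ℝ) + 1) = poiPMF μ j * μ := by
    unfold poiPMF
    rw [Nat.factorial_succ, pow_succ]
    push_cast
    field_simp
  have h4 := aux_pos μ hμ (j + 1)
  have h0 := aux_rec μ j
  rw [mul_div_assoc', div_le_iff₀ (by positivity), h0]
  nlinarith [mul_le_mul_of_nonneg_left hjk h4.le, mul_nonneg h2 hk.le]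

theorem poisson_tail_lower_bound
    (μ : ℝ) (k : ℕ) (hμ : 0 < μ) (hk : 0 < k) (hkμ : μ ≤ k)
    (ℓ : ℕ) (hℓ : ℓ = ⌊(k : ℝ) - μ⌋₊) :
    poiTail μ k ≥ 1 / 2 * (μ / ((k : ℝ) + μ)) ^ (ℓ + 1) := by
  have a1 : (ℓ : ℝ) ≤ k - μ := hℓ ▸ Nat.floor_le (by linarith)
  have a2 : (k : ℝ) - μ < ℓ + 1 := hℓ ▸ Nat.lt_floor_add_one _
  have a3 : ℓ < k := by
    have : (ℓ : ℝ) < k := by linarith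
    exact_mod_cast this
  clear hℓ
  obtain ⟨n, hn⟩ : ∃ n, k = n + (ℓ + 1) := ⟨k - (ℓ + 1), by omega⟩
  have hnμ : (n : ℝ) ≤ μ := by
    have : (k : ℝ) = n + (ℓ + 1) := by exact_mod_cast hn
    linarith
  have key : ∀ m, n + m ≤ k → 1 / 2 * (μ / ((k : ℝ) + μ)) ^ m ≤ poiTail μ (n + m) := by
    intro m
    induction m with
    | zero => intro _; simpa using aux_half μ hμ n hnμ
    | succ m ih =>
      intro h
      rw [pow_succ, ← mul_assoc]
      refine le_trans ?_ (aux_step μ hμ (n + m) k (by omega))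
      exact mul_le_mul_of_nonneg_right (ih (by omega)) (by positivity)
  have := key (ℓ + 1) hn.ge
  rw [← hn] at this
  exact this
end

section
/- Fix a positive integer $n$, a real number $p \in (0,1)$, and for every $j \le n$ let $X_j \sim \mathrm{Bin}(j,p)$. Let $k$ be a positive integer with $k \le n-1$. Then for every integer $\ell$ with $0 \le \ell \le k-1$, one has $\mathbb{P}[X_n \ge k] = \mathbb{P}[X_{n-(\ell+1)} \ge k - (\ell+1)] \cdot \prod_{j=0}^{\ell} \frac{p(n-j)}{\mathbb{E}[X_{n-j} \mid X_{n-j} \ge k-j]}$. -/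
theorem binTail_pos_aux (m q : ℕ) (p : ℝ) (hp : 0 < p) (hp1 : p < 1) (h : q ≤ m) :
    0 < binTail m p q := by
  unfold binTail
  apply Finset.sum_pos
  · intro i hi
    rw [Finset.mem_Icc] at hi
    have h1 : (0 : ℝ) < (m.choose i : ℝ) := by exact_mod_cast Nat.choose_pos hi.2
    have h2 : 0 < 1 - p := by linarith
    unfold binPMF
    positivity
  · exact ⟨q, Finset.mem_Icc.2 ⟨le_rfl, h⟩⟩

theorem bin_moment_aux (m q : ℕ) (p : ℝ) :
    ∑ i ∈ Finset.Icc (q + 1) (m + 1), (i : ℝ) * binPMF (m + 1) p i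
      = p * ((m : ℝ) + 1) * binTail m p q := by
  unfold binTail
  rw [← Finset.map_add_right_Icc q m 1, Finset.sum_map, Finset.mul_sum]
  apply Finset.sum_congr rfl
  intro i _
  have h : ((m : ℝ) + 1) * (m.choose i : ℝ) = ((m + 1).choose (i + 1) : ℝ) * ((i : ℝ) + 1) := by
    exact_mod_cast Nat.add_one_mul_choose_eq m i
  simp only [addRightEmbedding_apply, binPMF, Nat.add_sub_add_right]
  push_cast
  linear_combination (-(p ^ (i + 1) * (1 - p) ^ (m - i))) * h

theorem bin_step_aux (m q : ℕ) (p : ℝ) (hp : 0 < p) (hp1 : p < 1) (h : q ≤ m) :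
    binTail (m + 1) p (q + 1)
      = binTail m p q * (p * ((m : ℝ) + 1) / binTCE (m + 1) p (q + 1)) := by
  have h1 := binTail_pos_aux m q p hp hp1 h
  have h2 := binTail_pos_aux (m + 1) (q + 1) p hp hp1 (by omega)
  have h3 : (0 : ℝ) < (m : ℝ) + 1 := by positivity
  unfold binTCE
  rw [bin_moment_aux]
  field_simp

theorem binomial_tail_product_formula
    (n k : ℕ) (p : ℝ) (hn : 0 < n) (hp : 0 < p) (hp1 : p < 1)
    (hk : 0 < k) (hkn : k ≤ n - 1)
    (ℓ : ℕ) (hℓ : ℓ ≤ k - 1) :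
    binTail n p k =
      binTail (n - (ℓ + 1)) p (k - (ℓ + 1)) *
        ∏ j ∈ Finset.range (ℓ + 1), p * ((n : ℝ) - j) / binTCE (n - j) p (k - j) := by
  have key : ∀ L : ℕ, L ≤ k → binTail n p k = binTail (n - L) p (k - L) *
      ∏ j ∈ Finset.range L, p * ((n : ℝ) - j) / binTCE (n - j) p (k - j) := by
    intro L
    induction L with
    | zero => intro _; simp
    | succ L ih =>
      intro hL
      rw [Finset.prod_range_succ, ih (by omega)]
      obtain ⟨m, rfl⟩ : ∃ m, n = m + 1 + L := ⟨n - (L + 1), by omega⟩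
      obtain ⟨q, rfl⟩ : ∃ q, k = q + 1 + L := ⟨k - (L + 1), by omega⟩
      have e1 : m + 1 + L - (L + 1) = m := by omega
      have e2 : q + 1 + L - (L + 1) = q := by omega
      have e3 : (((m + 1 + L : ℕ) : ℝ) - (L : ℝ)) = (m : ℝ) + 1 := by push_cast; ring
      rw [e1, e2, e3, Nat.add_sub_cancel, Nat.add_sub_cancel]
      nth_rewrite 1 [bin_step_aux m q p hp hp1 (by omega)]
      ring
  exact key (ℓ + 1) (by omega)
end

section
/- Fix a positive integer $n$, a real number $p \in (0,1)$, a positive integer $k \le n$, and let $X_j \sim \mathrm{Bin}(j,p)$ for $j \le n$. Then $\mathbb{P}[X_n \ge k] = p^k \cdot \prod_{j=0}^{k-1} \frac{n-j}{\mathbb{E}[X_{n-j} \mid X_{n-j} \ge k-j]}$. -/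
theorem binTail_pos_aux_s6 (n k : ℕ) (p : ℝ) (hp : 0 < p) (hp1 : p < 1) (hkn : k ≤ n) :
    0 < binTail n p k := by
  unfold binTail
  apply Finset.sum_pos
  · intro i hi
    have h1 : 0 < n.choose i := Nat.choose_pos (Finset.mem_Icc.mp hi).2
    have h2 : 0 < 1 - p := by linarith
    unfold binPMF
    positivity
  · exact ⟨k, Finset.mem_Icc.mpr ⟨le_refl k, hkn⟩⟩

theorem binTail_sum_aux (n k : ℕ) (p : ℝ) :
    ∑ i ∈ Finset.Icc (k + 1) (n + 1), (i : ℝ) * binPMF (n + 1) p i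
      = ((n : ℝ) + 1) * p * binTail n p k := by
  unfold binTail
  rw [← Finset.map_add_right_Icc, Finset.sum_map, Finset.mul_sum]
  apply Finset.sum_congr rfl
  intro i hi
  have h : ((n : ℝ) + 1) * (n.choose i : ℝ) = ((n + 1).choose (i + 1) : ℝ) * ((i : ℝ) + 1) := by
    exact_mod_cast Nat.add_one_mul_choose_eq n i
  simp only [addRightEmbedding_apply, binPMF, Nat.add_sub_add_right, Nat.cast_add, Nat.cast_one]
  rw [pow_succ]
  linear_combination (-(p ^ i * p * (1 - p) ^ (n - i))) * h

theorem binTail_prod_aux (p : ℝ) (hp : 0 < p) (hp1 : p < 1) (k : ℕ) :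
    ∀ n : ℕ, k ≤ n → binTail n p k =
      p ^ k * ∏ j ∈ Finset.range k, ((n : ℝ) - j) / binTCE (n - j) p (k - j) := by
  induction k with
  | zero =>
    intro n _
    have h := add_pow p (1 - p) n
    rw [add_sub_cancel, one_pow] at h
    simp only [pow_zero, Finset.range_zero, Finset.prod_empty, mul_one]
    rw [h, binTail, ← Nat.range_succ_eq_Icc_zero]
    apply Finset.sum_congr rfl
    intro i _
    unfold binPMF
    ring
  | succ k ih =>
    intro n hn
    obtain ⟨m, rfl⟩ : ∃ m, n = m + 1 := ⟨n - 1, by omega⟩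
    have hkm : k ≤ m := by omega
    have h1 := binTail_pos_aux_s6 m k p hp hp1 hkm
    have h2 := binTail_pos_aux_s6 (m + 1) (k + 1) p hp hp1 hn
    have h3 := ih m hkm
    rw [Finset.prod_range_succ']
    simp only [Nat.add_sub_add_right, Nat.cast_add, Nat.cast_one, Nat.cast_zero, Nat.sub_zero,
      sub_zero, add_sub_add_right_eq_sub]
    have h4 : binTCE (m + 1) p (k + 1) =
        ((m : ℝ) + 1) * p * binTail m p k / binTail (m + 1) p (k + 1) := by
      rw [binTCE, binTail_sum_aux]
    rw [pow_succ, show ∀ a b c d : ℝ, a * b * (c * d) = (a * c) * (b * d) from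
      fun a b c d => by ring, ← h3, h4]
    have h5 : (0 : ℝ) < (m : ℝ) + 1 := by positivity
    field_simp

theorem binomial_tail_full_product_formula
    (n k : ℕ) (p : ℝ) (hn : 0 < n) (hp : 0 < p) (hp1 : p < 1)
    (hk : 0 < k) (hkn : k ≤ n) :
    binTail n p k =
      p ^ k * ∏ j ∈ Finset.range k, ((n : ℝ) - j) / binTCE (n - j) p (k - j) := by
  exact binTail_prod_aux p hp hp1 k n hkn
end

section
/- Let $X_n \sim \mathrm{Bin}(n,p)$ with $n$ a positive integer and $p \in (0,1)$. Then for every positive integer $k$ with $np < k \le n$, one has $\mathbb{P}[X_n \ge k] \le \frac{k(1-p)}{k - np} \cdot \mathbb{P}[X_n = k]$. -/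
lemma binPMF_rec (n i : ℕ) (p : ℝ) (hi : i ≤ n) :
    ((i : ℝ) + 1) * (1 - p) * binPMF n p (i + 1) = ((n : ℝ) - i) * p * binPMF n p i := by
  unfold binPMF
  rcases hi.eq_or_lt with rfl | h
  · simp
  · have h1 := Nat.choose_succ_right_eq n i
    have h2 : (n.choose (i + 1) : ℝ) * ((i : ℝ) + 1) = n.choose i * ((n : ℝ) - i) := by
      rw [← Nat.cast_sub hi]; exact_mod_cast h1
    have h3 : n - i = (n - (i + 1)) + 1 := by omega
    rw [h3, pow_succ, pow_succ]
    linear_combination (1 - p) * p ^ i * p * (1 - p) ^ (n - (i + 1)) * h2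

lemma binPMF_telescope (n k : ℕ) (p : ℝ) (m : ℕ) (hm : k ≤ m) : m ≤ n + 1 →
    ∑ i ∈ Finset.Ico k m, ((i : ℝ) - n * p) * binPMF n p i
      = (k : ℝ) * (1 - p) * binPMF n p k - (m : ℝ) * (1 - p) * binPMF n p m := by
  induction m, hm using Nat.le_induction with
  | base => intro _; simp
  | succ m hm ih =>
    intro h
    rw [Finset.sum_Ico_succ_top hm, ih (by omega)]
    have := binPMF_rec n m p (by omega)
    push_cast
    linear_combination this

theorem binomial_tail_le_point_mass
    (n k : ℕ) (p : ℝ) (hn : 0 < n) (hp : 0 < p) (hp1 : p < 1)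
    (hk : 0 < k) (hlow : (n : ℝ) * p < k) (hkn : k ≤ n) :
    binTail n p k ≤ (k : ℝ) * (1 - p) / ((k : ℝ) - n * p) * binPMF n p k := by
  have hpos : 0 < (k : ℝ) - n * p := by linarith
  have ht := binPMF_telescope n k p (n + 1) (by omega) le_rfl
  have h0 : binPMF n p (n + 1) = 0 := by simp [binPMF]
  rw [h0, mul_zero, sub_zero] at ht
  have hI : Finset.Icc k n = Finset.Ico k (n + 1) := by ext; simp
  rw [div_mul_eq_mul_div, le_div_iff₀ hpos, ← ht, binTail, hI, Finset.sum_mul]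
  apply Finset.sum_le_sum
  intro i hi
  have hki : (k : ℝ) ≤ i := by exact_mod_cast (Finset.mem_Ico.mp hi).1
  have hq : 0 ≤ 1 - p := by linarith
  have hb : 0 ≤ binPMF n p i := by unfold binPMF; positivity
  rw [mul_comm]
  exact mul_le_mul_of_nonneg_right (by linarith) hb
end

section
/- Let $X_n \sim \mathrm{Bin}(n,p)$ with $n$ a positive integer and $p \in (0,1)$. Then for every positive integer $k$ with $np < k \le n$, one has $\frac{\mathbb{P}[X_n \ge k+1]}{\mathbb{P}[X_n \ge k]} \le \frac{p(n-k)}{k(1-p)}$. -/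
lemma binPMF_succ_le (n k i : ℕ) (p : ℝ) (hp : 0 < p) (hp1 : p < 1)
    (hk : 0 < k) (hki : k ≤ i) (hin : i ≤ n) :
    binPMF n p (i + 1) ≤ p * ((n : ℝ) - k) / ((k : ℝ) * (1 - p)) * binPMF n p i := by
  have hq : 0 < 1 - p := by linarith
  have hk' : (0 : ℝ) < k := by exact_mod_cast hk
  have hki' : (k : ℝ) ≤ i := by exact_mod_cast hki
  have hin' : (i : ℝ) ≤ n := by exact_mod_cast hin
  have hb : ∀ j, 0 ≤ binPMF n p j := fun j => by unfold binPMF; positivity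
  have key : ((i : ℝ) + 1) * (1 - p) * binPMF n p (i + 1) = p * ((n : ℝ) - i) * binPMF n p i := by
    unfold binPMF
    rcases hin.eq_or_lt with h | h
    · subst h; simp
    · have hc : (n.choose (i + 1) : ℝ) * ((i : ℝ) + 1) = n.choose i * ((n : ℝ) - i) := by
        have := Nat.choose_succ_right_eq n i
        rw [← Nat.cast_sub hin]
        exact_mod_cast this
      have hs : n - i = (n - (i + 1)) + 1 := by omega
      rw [hs, pow_succ, pow_succ]
      linear_combination (p ^ i * p * (1 - p) ^ (n - (i + 1)) * (1 - p)) * hc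
  rw [div_mul_eq_mul_div, le_div_iff₀ (by positivity)]
  calc binPMF n p (i + 1) * (k * (1 - p)) = k * (1 - p) * binPMF n p (i + 1) := by ring
    _ ≤ ((i : ℝ) + 1) * (1 - p) * binPMF n p (i + 1) := by
        have := hb (i + 1)
        gcongr
        linarith
    _ = p * ((n : ℝ) - i) * binPMF n p i := key
    _ ≤ p * ((n : ℝ) - k) * binPMF n p i := by
        have := hb i
        gcongr

theorem binomial_tail_ratio_bound
    (n k : ℕ) (p : ℝ) (hn : 0 < n) (hp : 0 < p) (hp1 : p < 1)
    (hk : 0 < k) (hlow : (n : ℝ) * p < k) (hkn : k ≤ n) :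
    binTail n p (k + 1) / binTail n p k ≤ p * ((n : ℝ) - k) / ((k : ℝ) * (1 - p)) := by
  have hq : 0 < 1 - p := by linarith
  have hb : ∀ j, 0 ≤ binPMF n p j := fun j => by unfold binPMF; positivity
  have hT : 0 < binTail n p k := by
    unfold binTail
    refine Finset.sum_pos' (fun i _ => hb i) ⟨k, Finset.mem_Icc.2 ⟨le_rfl, hkn⟩, ?_⟩
    have := Nat.choose_pos hkn
    unfold binPMF
    positivity
  rw [div_le_iff₀ hT]
  unfold binTail
  rw [Finset.mul_sum]
  calc ∑ i ∈ Finset.Icc (k + 1) n, binPMF n p i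
      ≤ ∑ i ∈ Finset.Icc (k + 1) (n + 1), binPMF n p i :=
        Finset.sum_le_sum_of_subset_of_nonneg
          (Finset.Icc_subset_Icc_right (Nat.le_succ n)) (fun i _ _ => hb i)
    _ = ∑ i ∈ Finset.Icc k n, binPMF n p (i + 1) := by
        rw [← Finset.map_add_right_Icc k n 1, Finset.sum_map]
        rfl
    _ ≤ _ := Finset.sum_le_sum fun i hi =>
        binPMF_succ_le n k i p hp hp1 hk (Finset.mem_Icc.1 hi).1 (Finset.mem_Icc.1 hi).2
end

section
/- Let $X_n \sim \mathrm{Bin}(n,p)$ with $n$ a positive integer and $p \in (0,1)$. Then for every positive integer $k$ with $np < k \le n$, one has $\frac{\mathbb{P}[X_n \ge k+1]}{\mathbb{P}[X_n \ge k]} \le \frac{p(n-k)}{(k+1)(1-p)}$. -/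
theorem binPMF_step_aux (n k i : ℕ) (p : ℝ) (hp : 0 < p) (hp1 : p < 1) (hki : k ≤ i) (hin : i ≤ n) :
    binPMF n p (i + 1) * (((k : ℝ) + 1) * (1 - p)) ≤ p * ((n : ℝ) - k) * binPMF n p i := by
  have hq : 0 < 1 - p := by linarith
  have hnn : ∀ j, 0 ≤ binPMF n p j := fun j => by unfold binPMF; positivity
  have hki' : (k : ℝ) ≤ i := by exact_mod_cast hki
  have heq : binPMF n p (i + 1) * (((i : ℝ) + 1) * (1 - p)) = p * ((n : ℝ) - i) * binPMF n p i := by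
    have hc : (n.choose (i + 1) : ℝ) * ((i : ℝ) + 1) = n.choose i * ((n : ℝ) - i) := by
      have := Nat.choose_succ_right_eq n i
      rw [← Nat.cast_sub hin]
      exact_mod_cast this
    rcases hin.eq_or_lt with rfl | h
    · simp [binPMF]
    · unfold binPMF
      have e : n - i = (n - (i + 1)) + 1 := by omega
      rw [e, pow_succ (1 - p), pow_succ p]
      linear_combination p ^ i * p * (1 - p) ^ (n - (i + 1)) * (1 - p) * hc
  calc _ ≤ binPMF n p (i + 1) * (((i : ℝ) + 1) * (1 - p)) := by
        have := hnn (i + 1)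
        gcongr
    _ = _ := heq
    _ ≤ _ := by
        have := hnn i
        gcongr

theorem binomial_tail_ratio_bound_sharp
    (n k : ℕ) (p : ℝ) (hn : 0 < n) (hp : 0 < p) (hp1 : p < 1)
    (hk : 0 < k) (hlow : (n : ℝ) * p < k) (hkn : k ≤ n) :
    binTail n p (k + 1) / binTail n p k ≤
      p * ((n : ℝ) - k) / (((k : ℝ) + 1) * (1 - p)) := by
  have hq : 0 < 1 - p := by linarith
  have hnn : ∀ j, 0 ≤ binPMF n p j := fun j => by unfold binPMF; positivity
  have hpos : 0 < binTail n p k := by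
    unfold binTail
    apply Finset.sum_pos
    · intro i hi
      have : 0 < n.choose i := Nat.choose_pos (Finset.mem_Icc.mp hi).2
      unfold binPMF
      positivity
    · exact ⟨k, by simp [hkn]⟩
  rw [div_le_div_iff₀ hpos (by positivity)]
  have h1 : binTail n p (k + 1) ≤ ∑ i ∈ Finset.Icc k n, binPMF n p (i + 1) := by
    unfold binTail
    have h2 : ∑ i ∈ Finset.Icc k n, binPMF n p (i + 1)
        = ∑ i ∈ Finset.Icc (k + 1) (n + 1), binPMF n p i := by
      rw [← Finset.map_add_right_Icc, Finset.sum_map]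
      simp
    rw [h2]
    apply Finset.sum_le_sum_of_subset_of_nonneg
    · exact Finset.Icc_subset_Icc le_rfl (by omega)
    · intro i _ _
      exact hnn i
  calc _ ≤ (∑ i ∈ Finset.Icc k n, binPMF n p (i + 1)) * (((k : ℝ) + 1) * (1 - p)) := by
        gcongr
    _ ≤ _ := by
        unfold binTail
        rw [Finset.sum_mul, Finset.mul_sum]
        apply Finset.sum_le_sum
        intro i hi
        rw [Finset.mem_Icc] at hi
        exact binPMF_step_aux n k i p hp hp1 hi.1 hi.2
end

section
/- Let $Y \sim \mathrm{Poi}(\mu)$ with $\mu > 0$, and let $k$ be a positive integer. Then $\frac{\mathbb{P}[Y \ge k]}{\mathbb{P}[Y \ge k-1]} \le \frac{\mu}{k}$. -/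
theorem poiPMF_summable (μ : ℝ) (k : ℕ) : Summable fun j : ℕ => poiPMF μ (k + j) := by
  have h : Summable (poiPMF μ) := by
    have := (Real.summable_pow_div_factorial μ).mul_left (Real.exp (-μ))
    refine this.congr fun n => ?_
    simp [poiPMF, mul_div_assoc]
  exact h.comp_injective (add_right_injective k)

theorem poisson_tail_ratio_bound
    (μ : ℝ) (k : ℕ) (hμ : 0 < μ) (hk : 0 < k) :
    poiTail μ k / poiTail μ (k - 1) ≤ μ / k := by
  obtain ⟨m, rfl⟩ : ∃ m, k = m + 1 := ⟨k - 1, by omega⟩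
  rw [Nat.add_sub_cancel]
  have hp : ∀ i, 0 < poiPMF μ i := fun i => by unfold poiPMF; positivity
  have hpos : 0 < poiTail μ m :=
    (poiPMF_summable μ m).tsum_pos (fun j => (hp _).le) 0 (hp _)
  rw [div_le_iff₀ hpos]
  unfold poiTail
  rw [← tsum_mul_left]
  refine (poiPMF_summable μ (m + 1)).tsum_le_tsum (fun j => ?_)
    ((poiPMF_summable μ m).mul_left _)
  have h1 : poiPMF μ (m + 1 + j) = μ / ((m + j + 1 : ℕ) : ℝ) * poiPMF μ (m + j) := by
    rw [show m + 1 + j = m + j + 1 by ring]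
    unfold poiPMF
    rw [Nat.factorial_succ, Nat.cast_mul, pow_succ]
    field_simp
  rw [h1]
  refine mul_le_mul_of_nonneg_right ?_ (hp _).le
  refine div_le_div_of_nonneg_left hμ.le (by positivity) ?_
  exact_mod_cast (by omega : m + 1 ≤ m + j + 1)
end

section
/- Let $n$ be a positive integer, $p \in (0,1)$, and let $X \sim \mathrm{Bin}(n,p)$. If $k$ is a positive integer with $np < k < np + 1 - p$ and $k \le n-1$, then $\mathbb{P}[X \ge k] \ge \frac{1}{2} p^2 \cdot \frac{n}{k} \ge \frac{p}{2}\left(1 - \frac{1-p}{k}\right) \ge \frac{p}{2}\left(1 - \frac{1}{k}\right)$. -/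
lemma aux_rec_s15 (m : ℕ) (p : ℝ) (x : ℕ) :
    binPMF m p (x+1) * (x+1) * (1-p) = binPMF m p x * ((m:ℝ) - x) * p := by
  unfold binPMF
  rcases lt_or_ge x m with h | h
  · have h1 : m - x = (m - (x+1)) + 1 := by omega
    have h2 := Nat.choose_succ_right_eq m x
    have h3 : ((m.choose (x+1) : ℝ)) * (x+1) = m.choose x * ((m:ℝ) - x) := by
      rw [← Nat.cast_sub h.le]; exact_mod_cast h2
    rw [h1, pow_succ, pow_succ]
    linear_combination (p ^ x * p * (1 - p) ^ (m - (x + 1)) * (1-p)) * h3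
  · rw [Nat.choose_eq_zero_of_lt (by omega : m < x+1)]
    rcases h.eq_or_lt with h | h
    · subst h; simp
    · rw [Nat.choose_eq_zero_of_lt h]; simp

lemma aux_zero_s15 (m : ℕ) (p : ℝ) (x : ℕ) (h : m < x) : binPMF m p x = 0 := by
  simp [binPMF, Nat.choose_eq_zero_of_lt h]

lemma aux_nonneg (m : ℕ) (p : ℝ) (hp : 0 < p) (hp1 : p < 1) (x : ℕ) : 0 ≤ binPMF m p x := by
  have : 0 < 1 - p := by linarith
  unfold binPMF; positivity

lemma aux_pos_s15 (m : ℕ) (p : ℝ) (hp : 0 < p) (hp1 : p < 1) (x : ℕ) (h : x ≤ m) :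
    0 < binPMF m p x := by
  have : 0 < 1 - p := by linarith
  have := Nat.choose_pos h
  unfold binPMF; positivity

lemma aux_total (m : ℕ) (p : ℝ) : ∑ x ∈ Finset.range (m+1), binPMF m p x = 1 := by
  have h := add_pow p (1-p) m
  simp only [add_sub_cancel, one_pow] at h
  rw [h]
  refine Finset.sum_congr rfl fun x _ => ?_
  unfold binPMF; ring

lemma aux_mean (m : ℕ) (p : ℝ) :
    ∑ x ∈ Finset.range (m+1), (x:ℝ) * binPMF m p x = m * p := by
  have h1 : ∑ x ∈ Finset.range (m+1), binPMF m p (x+1) * (x+1) * (1-p)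
      = ∑ x ∈ Finset.range (m+1), binPMF m p x * ((m:ℝ) - x) * p :=
    Finset.sum_congr rfl fun x _ => aux_rec_s15 m p x
  have h2 : ∑ x ∈ Finset.range (m+1), binPMF m p (x+1) * (x+1) * (1-p)
      = (∑ x ∈ Finset.range (m+1), (x:ℝ) * binPMF m p x) * (1-p) := by
    rw [← Finset.sum_mul]
    congr 1
    have h3 := Finset.sum_range_succ' (fun x : ℕ => (x:ℝ) * binPMF m p x) (m+1)
    rw [Finset.sum_range_succ, aux_zero_s15 m p (m+1) (by omega)] at h3
    simp only [mul_zero, add_zero, Nat.cast_zero, zero_mul] at h3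
    rw [h3]
    refine Finset.sum_congr rfl fun x _ => ?_
    push_cast; ring
  have h4 : ∑ x ∈ Finset.range (m+1), binPMF m p x * ((m:ℝ) - x) * p
      = m * p * (∑ x ∈ Finset.range (m+1), binPMF m p x)
        - p * ∑ x ∈ Finset.range (m+1), (x:ℝ) * binPMF m p x := by
    rw [Finset.mul_sum, Finset.mul_sum, ← Finset.sum_sub_distrib]
    refine Finset.sum_congr rfl fun x _ => ?_
    ring
  rw [aux_total] at h4
  linarith

noncomputable def auxL (m : ℕ) (p : ℝ) (j i : ℕ) : ℝ :=
  if i < j then binPMF m p (j-1-i) else 0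

lemma aux_split_s15 (m : ℕ) (p : ℝ) (j : ℕ) (hj : j ≤ m) (f : ℕ → ℝ) :
    ∑ x ∈ Finset.range (m+1), f x * binPMF m p x =
      ∑ i ∈ Finset.range (m+1), f (j-1-i) * auxL m p j i
      + ∑ i ∈ Finset.range (m+1), f (j+i) * binPMF m p (j+i) := by
  have h1 : ∑ x ∈ Finset.range (m+1), f x * binPMF m p x
      = ∑ x ∈ Finset.range (j+(m+1)), f x * binPMF m p x := by
    refine Finset.sum_subset (fun x => by simp; omega) fun x _ hx => ?_
    rw [aux_zero_s15 m p x (by simpa using hx), mul_zero]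
  have h2 : ∑ i ∈ Finset.range (m+1), f (j-1-i) * auxL m p j i
      = ∑ i ∈ Finset.range j, f (j-1-i) * binPMF m p (j-1-i) := by
    rw [← Finset.sum_subset (s₁ := Finset.range j) (s₂ := Finset.range (m+1))
      (f := fun i => f (j-1-i) * auxL m p j i) (fun x => by simp; omega)]
    · refine Finset.sum_congr rfl fun x hx => ?_
      simp [auxL, Finset.mem_range.1 hx]
    · intro x _ hx
      have : ¬ x < j := by simpa using hx
      simp [auxL, this]
  rw [h1, h2, Finset.sum_range_add, Finset.sum_range_reflect (fun x => f x * binPMF m p x)]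

/-- ratio relation -/
lemma aux_ratio (m : ℕ) (p : ℝ) (j i : ℕ) (h : i + 1 < j) :
    binPMF m p (j+(i+1)) * auxL m p j i * (((j:ℝ)^2-(i+1)^2)*(1-p)^2)
    = binPMF m p (j+i) * auxL m p j (i+1) * ((((m:ℝ)-j+1)^2-(i+1)^2)*p^2) := by
  have h1 := aux_rec_s15 m p (j+i)
  have h2 := aux_rec_s15 m p (j-1-(i+1))
  have e : j-1-(i+1)+1 = j-1-i := by omega
  have e2 : ((j-1-(i+1) : ℕ):ℝ) = (j:ℝ) - i - 2 := by
    have : j = (j-1-(i+1)) + i + 2 := by omega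
    have h3 : (j:ℝ) = ((j-1-(i+1) : ℕ):ℝ) + i + 2 := by exact_mod_cast this
    linarith
  rw [e, e2] at h2
  simp only [auxL, if_pos h, if_pos (by omega : i < j)]
  push_cast at h1
  rw [← add_assoc]
  have key : (binPMF m p (j+i+1) * ((j:ℝ)+i+1) * (1-p)) * (binPMF m p (j-1-i) * ((j:ℝ)-i-2+1) * (1-p))
    = (binPMF m p (j+i) * ((m:ℝ)-(j+i)) * p) * (binPMF m p (j-1-(i+1)) * ((m:ℝ)-(j-i-2)) * p) := by
    rw [h1, h2]
  linear_combination key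

set_option maxHeartbeats 1000000 in
lemma aux_median (m : ℕ) (p : ℝ) (hp : 0 < p) (hp1 : p < 1) (j : ℕ) (hj : (j:ℝ) ≤ m * p) :
    1/2 ≤ ∑ i ∈ Finset.range (m+1), binPMF m p (j+i) := by
  have hq : 0 < 1 - p := by linarith
  have hjm : j ≤ m := by
    have : (j:ℝ) ≤ m := hj.trans (by nlinarith [(Nat.cast_nonneg m : (0:ℝ) ≤ m)])
    exact_mod_cast this
  have hLpos : ∀ i, i < j → 0 < auxL m p j i := fun i hi => by
    simp only [auxL, if_pos hi]; exact aux_pos_s15 m p hp hp1 _ (by omega)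
  have hL0 : ∀ i, 0 ≤ auxL m p j i := fun i => by
    by_cases hi : i < j
    · exact (hLpos i hi).le
    · simp [auxL, hi]
  have hU0 : ∀ i, 0 ≤ binPMF m p (j+i) := fun i => aux_nonneg m p hp hp1 _
  have htot := aux_split_s15 m p j hjm (fun _ => 1)
  simp only [one_mul, aux_total] at htot
  have hmean := aux_split_s15 m p j hjm (fun x => (x:ℝ) - j)
  have hm1 : ∑ x ∈ Finset.range (m+1), ((x:ℝ)-j) * binPMF m p x = m * p - j := by
    simp only [sub_mul, Finset.sum_sub_distrib, ← Finset.mul_sum, aux_mean, aux_total, mul_one]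
  have hm2 : ∑ i ∈ Finset.range (m+1), (((j-1-i : ℕ):ℝ)-j) * auxL m p j i
      = - ∑ i ∈ Finset.range (m+1), ((i:ℝ)+1) * auxL m p j i := by
    rw [← Finset.sum_neg_distrib]
    refine Finset.sum_congr rfl fun i _ => ?_
    by_cases hi : i < j
    · have : j = (j-1-i) + i + 1 := by omega
      have h3 : (j:ℝ) = ((j-1-i : ℕ):ℝ) + i + 1 := by exact_mod_cast this
      linear_combination (-auxL m p j i) * h3
    · simp [auxL, hi]
  rw [hm1, hm2] at hmean
  set L := ∑ i ∈ Finset.range (m+1), auxL m p j i with hL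
  set U := ∑ i ∈ Finset.range (m+1), binPMF m p (j+i) with hU
  have hLn : 0 ≤ L := Finset.sum_nonneg fun i _ => hL0 i
  have hid : 0 ≤ ∑ i ∈ Finset.range (m+1), (i:ℝ) * (binPMF m p (j+i) - auxL m p j i) := by
    have : ∑ i ∈ Finset.range (m+1), (i:ℝ) * (binPMF m p (j+i) - auxL m p j i)
      = ∑ i ∈ Finset.range (m+1), (((j+i:ℕ):ℝ)-j) * binPMF m p (j+i)
        - ∑ i ∈ Finset.range (m+1), ((i:ℝ)+1) * auxL m p j i + L := by
      rw [hL, ← Finset.sum_sub_distrib, ← Finset.sum_add_distrib]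
      refine Finset.sum_congr rfl fun i _ => ?_
      push_cast; ring
    rw [this]; linarith
  have hd : U - L = ∑ i ∈ Finset.range (m+1), (binPMF m p (j+i) - auxL m p j i) := by
    rw [Finset.sum_sub_distrib]
  suffices 0 ≤ U - L by linarith
  by_cases hex : ∃ i, binPMF m p (j+i) < auxL m p j i
  swap
  · push Not at hex
    rw [hd]; exact Finset.sum_nonneg fun i _ => sub_nonneg.2 (hex i)
  classical
  obtain ⟨c, hc, hmin⟩ : ∃ c, binPMF m p (j+c) < auxL m p j c ∧
      ∀ i < c, auxL m p j i ≤ binPMF m p (j+i) :=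
    ⟨Nat.find hex, Nat.find_spec hex, fun i hi => not_lt.1 (Nat.find_min hex hi)⟩
  have hcj : c < j := by
    by_contra h
    have := hU0 c
    simp [auxL, h] at hc; linarith
  obtain ⟨d, rfl⟩ : ∃ d, c = d + 1 := by
    rcases c with _ | d
    · exfalso
      have h1 := aux_rec_s15 m p (j-1)
      have e : j-1+1 = j := by omega
      have e2 : ((j-1:ℕ):ℝ) = (j:ℝ)-1 := by rw [Nat.cast_sub (by omega)]; simp
      rw [e, e2] at h1
      simp only [auxL, if_pos hcj, add_zero, Nat.sub_zero] at hc
      have hjp : (0:ℝ) < j := by exact_mod_cast hcj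
      have hl := aux_nonneg m p hp hp1 (j-1)
      have h2 : binPMF m p j * (j * (1-p)) < binPMF m p (j-1) * (j*(1-p)) :=
        mul_lt_mul_of_pos_right hc (by positivity)
      have h3 : binPMF m p (j-1) * (j*(1-p)) ≤ binPMF m p (j-1) * (((m:ℝ)-(j-1))*p) :=
        mul_le_mul_of_nonneg_left (by nlinarith) hl
      linarith
    · exact ⟨d, rfl⟩
  -- the ratio is decreasing at the crossing
  have hAB : (((m:ℝ)-j+1)^2-((d:ℝ)+1)^2)*p^2 < ((j:ℝ)^2-((d:ℝ)+1)^2)*(1-p)^2 := by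
    by_contra h
    push Not at h
    have hr := aux_ratio m p j d hcj
    have hdj : ((d:ℝ)+1) < j := by exact_mod_cast hcj
    have hA : 0 < ((j:ℝ)^2-((d:ℝ)+1)^2)*(1-p)^2 := by
      have : 0 < (j:ℝ)^2-((d:ℝ)+1)^2 := by nlinarith [(Nat.cast_nonneg d : (0:ℝ) ≤ d)]
      positivity
    have hl1 := hLpos d (by omega)
    have hl2 := hLpos (d+1) hcj
    have a1 : binPMF m p (j+(d+1)) * auxL m p j d < auxL m p j (d+1) * auxL m p j d :=
      mul_lt_mul_of_pos_right hc hl1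
    have a2 : auxL m p j (d+1) * auxL m p j d ≤ binPMF m p (j+d) * auxL m p j (d+1) := by
      rw [mul_comm]; exact mul_le_mul_of_nonneg_right (hmin d (by omega)) hl2.le
    have a3 := mul_lt_mul_of_pos_right (a1.trans_le a2) hA
    have a4 := mul_le_mul_of_nonneg_left h (mul_nonneg (hU0 d) hl2.le)
    linarith
  have hdj : ((d:ℝ)+1) < j := by exact_mod_cast hcj
  have hd0 : (0:ℝ) ≤ d := Nat.cast_nonneg d
  have hj0 : (0:ℝ) < j := by linarith
  have hs0 : (0:ℝ) ≤ (m:ℝ) - j := by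
    have : (j:ℝ) ≤ m := by exact_mod_cast hjm
    linarith
  have hs : (j:ℝ) * (1-p) < ((m:ℝ)-j+1)*p := by nlinarith
  have hs2 : ((j:ℝ) * (1-p))^2 < (((m:ℝ)-j+1)*p)^2 :=
    pow_lt_pow_left₀ hs (by positivity) two_ne_zero
  have hpq : (1-p)^2 < p^2 := by
    by_contra h
    push Not at h
    linarith [mul_nonneg (sq_nonneg ((d:ℝ)+1)) (sub_nonneg.2 h)]
  have hABi : ∀ i : ℕ, d ≤ i →
      (((m:ℝ)-j+1)^2-((i:ℝ)+1)^2)*p^2 < ((j:ℝ)^2-((i:ℝ)+1)^2)*(1-p)^2 := by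
    intro i hi
    have h1 : (d:ℝ) ≤ i := by exact_mod_cast hi
    have h2 : ((d:ℝ)+1)^2 ≤ ((i:ℝ)+1)^2 := by gcongr
    linarith [mul_nonneg (sub_nonneg.2 h2) (sub_nonneg.2 hpq.le)]
  have hsj : (m:ℝ)-j+1 < j := by
    by_contra h
    push Not at h
    have h2 : (j:ℝ)^2 ≤ ((m:ℝ)-j+1)^2 := by gcongr
    have h3 : 0 < (j:ℝ)^2-((d:ℝ)+1)^2 :=
      sub_pos.2 (pow_lt_pow_left₀ hdj (by linarith) two_ne_zero)
    linarith [mul_pos h3 (sub_pos.2 hpq), mul_nonneg (sub_nonneg.2 h2) (sq_nonneg p)]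
  have hafter : ∀ i, d + 1 ≤ i → i < j → binPMF m p (j+i) < auxL m p j i := by
    intro i hi
    induction i, hi using Nat.le_induction with
    | base => intro _; exact hc
    | succ i hi ih =>
      intro hij
      have ih := ih (by omega)
      by_contra h
      push Not at h
      have hr := aux_ratio m p j i hij
      have hab := hABi i (by omega)
      have hij' : ((i:ℝ)+1) < j := by exact_mod_cast hij
      have hA : 0 < ((j:ℝ)^2-((i:ℝ)+1)^2)*(1-p)^2 := by
        have : 0 < (j:ℝ)^2-((i:ℝ)+1)^2 := by nlinarith [(Nat.cast_nonneg i : (0:ℝ) ≤ i)]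
        positivity
      have hl1 := hLpos i (by omega)
      have hl2 := hLpos (i+1) hij
      have a1 : auxL m p j (i+1) * auxL m p j i ≤ binPMF m p (j+(i+1)) * auxL m p j i :=
        mul_le_mul_of_nonneg_right h hl1.le
      have a2 : binPMF m p (j+i) * auxL m p j (i+1) < auxL m p j (i+1) * auxL m p j i := by
        rw [mul_comm (auxL m p j (i+1))]; exact mul_lt_mul_of_pos_right ih hl2
      have a3 := mul_lt_mul_of_pos_right (a2.trans_le a1) hA
      have a4 := mul_le_mul_of_nonneg_left hab.le (mul_nonneg (hU0 i) hl2.le)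
      linarith
  have hafter' : ∀ i, d + 1 ≤ i → binPMF m p (j+i) ≤ auxL m p j i := by
    intro i hi
    by_cases hij : i < j
    · exact (hafter i hi hij).le
    · have : m + 1 < j + j := by
        have : (m:ℝ) + 1 < j + j := by linarith
        exact_mod_cast this
      rw [aux_zero_s15 m p (j+i) (by omega)]
      exact hL0 i
  have hfin : ∑ i ∈ Finset.range (m+1), (i:ℝ) * (binPMF m p (j+i) - auxL m p j i)
      ≤ ((d:ℝ)+1) * (U - L) := by
    rw [hd, Finset.mul_sum]
    refine Finset.sum_le_sum fun i _ => ?_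
    rcases lt_or_ge i (d+1) with h | h
    · have h1 : (i:ℝ) ≤ d+1 := by exact_mod_cast h.le
      exact mul_le_mul_of_nonneg_right h1 (sub_nonneg.2 (hmin i h))
    · have h1 : (d:ℝ)+1 ≤ i := by exact_mod_cast h
      exact mul_le_mul_of_nonpos_right h1 (sub_nonpos.2 (hafter' i h))
  have : 0 ≤ ((d:ℝ)+1) * (U - L) := hid.trans hfin
  exact nonneg_of_mul_nonneg_right this (by linarith)

lemma aux_step_s15 (m : ℕ) (p : ℝ) (hp : 0 < p) (hp1 : p < 1) (x : ℕ) :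
    p * binPMF m p x ≤ binPMF (m+1) p (x+1) := by
  have hq : 0 < 1 - p := by linarith
  unfold binPMF
  rw [Nat.choose_succ_succ, Nat.add_sub_add_right]
  push_cast
  have : 0 ≤ (m.choose (x+1) : ℝ) * p^(x+1) * (1-p)^(m-x) := by positivity
  simp only [Nat.succ_eq_add_one]
  rw [pow_succ] at this ⊢
  linarith

lemma aux_tail (m : ℕ) (p : ℝ) (hp : 0 < p) (hp1 : p < 1) (j : ℕ) :
    p * ∑ i ∈ Finset.range (m+1), binPMF m p (j+i) ≤ binTail (m+1) p (j+1) := by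
  have h : binTail (m+1) p (j+1) = ∑ i ∈ Finset.range (m+1), binPMF (m+1) p (j+i+1) := by
    unfold binTail
    rw [← Finset.Ico_add_one_right_eq_Icc, Finset.sum_Ico_eq_sum_range]
    rw [← Finset.sum_subset (s₁ := Finset.range (m+1+1-(j+1))) (s₂ := Finset.range (m+1))
      (f := fun i => binPMF (m+1) p (j+i+1)) (fun x => by simp; omega)]
    · rw [show m+1+1-(j+1) = m+1+1-(j+1) from rfl]
      refine Finset.sum_congr rfl fun x _ => ?_
      congr 1; omega
    · intro x _ hx
      refine aux_zero_s15 _ _ _ ?_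
      simp at hx; omega
  rw [h, Finset.mul_sum]
  exact Finset.sum_le_sum fun i _ => aux_step_s15 m p hp hp1 _

theorem binomial_tail_lower_bound_ell_zero
    (n k : ℕ) (p : ℝ) (hn : 0 < n) (hp : 0 < p) (hp1 : p < 1)
    (hk : 0 < k) (hlow : (n : ℝ) * p < k) (hup : (k : ℝ) < n * p + 1 - p)
    (hkn : k ≤ n - 1) :
    binTail n p k ≥ 1 / 2 * p ^ 2 * ((n : ℝ) / k) ∧
      1 / 2 * p ^ 2 * ((n : ℝ) / k) ≥ p / 2 * (1 - (1 - p) / k) ∧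
      p / 2 * (1 - (1 - p) / k) ≥ p / 2 * (1 - 1 / (k : ℝ)) := by
  have hk0 : (0:ℝ) < k := by exact_mod_cast hk
  refine ⟨?_, ?_, ?_⟩
  · obtain ⟨m, rfl⟩ : ∃ m, n = m + 1 := ⟨n-1, by omega⟩
    obtain ⟨j, rfl⟩ : ∃ j, k = j + 1 := ⟨k-1, by omega⟩
    have h1 := aux_median m p hp hp1 j (by push_cast at hup; linarith)
    have h2 := aux_tail m p hp hp1 j
    have h3 : p * (1/2) ≤ binTail (m+1) p (j+1) :=
      (mul_le_mul_of_nonneg_left h1 hp.le).trans h2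
    refine le_trans ?_ h3
    have h4 : ((m+1:ℕ):ℝ) * p / ((j+1:ℕ):ℝ) ≤ 1 := (div_le_one hk0).2 hlow.le
    calc 1 / 2 * p ^ 2 * (((m+1:ℕ):ℝ) / ((j+1:ℕ):ℝ))
        = p * (1/2) * (((m+1:ℕ):ℝ) * p / ((j+1:ℕ):ℝ)) := by ring
      _ ≤ p * (1/2) * 1 := mul_le_mul_of_nonneg_left h4 (by positivity)
      _ = p * (1/2) := mul_one _
  · have h : 1 - (1-p)/(k:ℝ) ≤ n * p / k := by
      rw [one_sub_div hk0.ne']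
      gcongr
      linarith
    calc p / 2 * (1 - (1 - p) / k) ≤ p / 2 * (n * p / k) :=
          mul_le_mul_of_nonneg_left h (by positivity)
      _ = 1 / 2 * p ^ 2 * ((n : ℝ) / k) := by ring
  · refine mul_le_mul_of_nonneg_left ?_ (by positivity)
    have : (1-p)/(k:ℝ) ≤ 1/k := by gcongr; linarith
    linarith
end

section
/- Let $Y \sim \mathrm{Poi}(\mu)$ with $\mu > 0$, and let $k$ be a positive integer with $\mu \le k < \mu + 1$. Then $\mathbb{P}[Y \ge k] \ge \frac{1}{2} \cdot \frac{\mu}{2\mu + 1}$. -/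
theorem poiPMF_nonneg' (μ : ℝ) (hμ : 0 < μ) (i : ℕ) : 0 ≤ poiPMF μ i := by
  unfold poiPMF; positivity

theorem poiPMF_succ' (μ : ℝ) (i : ℕ) :
    poiPMF μ (i + 1) * ((i : ℝ) + 1) = poiPMF μ i * μ := by
  unfold poiPMF
  rw [Nat.factorial_succ]
  push_cast
  have : (Nat.factorial i : ℝ) ≠ 0 := by positivity
  have h2 : (i : ℝ) + 1 ≠ 0 := by positivity
  field_simp
  ring

theorem poiPMF_hasSum' (μ : ℝ) : HasSum (poiPMF μ) 1 := by
  have h := NormedSpace.expSeries_div_hasSum_exp (𝔸 := ℝ) μ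
  rw [← Real.exp_eq_exp_ℝ] at h
  have h2 := h.mul_left (Real.exp (-μ))
  rw [← Real.exp_add, neg_add_cancel, Real.exp_zero] at h2
  have e : poiPMF μ = fun i => Real.exp (-μ) * (μ ^ i / (Nat.factorial i : ℝ)) := by
    funext i
    unfold poiPMF
    ring
  rw [e]
  exact h2

theorem poiTail_eq' (μ : ℝ) (k : ℕ) :
    ∑ i ∈ Finset.range k, poiPMF μ i + poiTail μ k = 1 := by
  have h := (poiPMF_hasSum' μ).summable.sum_add_tsum_nat_add k
  rw [(poiPMF_hasSum' μ).tsum_eq] at h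
  unfold poiTail
  simpa [add_comm] using h

theorem poiPMF_pair' (μ : ℝ) (hμ : 0 < μ) (j : ℕ) : ∀ a : ℕ, (a : ℝ) + j + 1 ≤ μ →
    poiPMF μ a ≤ poiPMF μ (a + 2 * j + 1) := by
  induction j with
  | zero =>
    intro a h
    have h1 := poiPMF_succ' μ a
    have h0 := poiPMF_nonneg' μ hμ (a + 1)
    simp only [Nat.cast_zero, add_zero] at h
    simp only [mul_zero, add_zero]
    have : poiPMF μ a * μ ≤ poiPMF μ (a + 1) * μ := by
      rw [← h1]; exact mul_le_mul_of_nonneg_left h h0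
    exact le_of_mul_le_mul_right this hμ
  | succ j ih =>
    intro a h
    push_cast at h
    have i1 := ih (a + 1) (by push_cast; linarith)
    have e : a + 1 + 2 * j + 1 = a + 2 * j + 2 := by ring
    rw [e] at i1
    have r1 := poiPMF_succ' μ a
    have r2 := poiPMF_succ' μ (a + 2 * j + 2)
    have e2 : a + 2 * (j + 1) + 1 = a + 2 * j + 2 + 1 := by ring
    rw [e2]
    push_cast at r2
    have n2 := poiPMF_nonneg' μ hμ (a + 2 * j + 2)
    set x := poiPMF μ a
    set y := poiPMF μ (a + 1)
    set z := poiPMF μ (a + 2 * j + 2)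
    set w := poiPMF μ (a + 2 * j + 2 + 1)
    have ha : (0 : ℝ) ≤ a := Nat.cast_nonneg a
    have hj : (0 : ℝ) ≤ j := Nat.cast_nonneg j
    have key : ((a : ℝ) + 1) * (a + 2 * j + 2 + 1) ≤ μ * μ := by nlinarith
    have c : (0 : ℝ) < μ * (a + 2 * j + 2 + 1) := by positivity
    refine le_of_mul_le_mul_right ?_ c
    calc x * (μ * (a + 2 * j + 2 + 1)) = y * (((a : ℝ) + 1) * (a + 2 * j + 2 + 1)) := by
          linear_combination (-(a + 2 * j + 2 + 1 : ℝ)) * r1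
      _ ≤ z * (((a : ℝ) + 1) * (a + 2 * j + 2 + 1)) :=
          mul_le_mul_of_nonneg_right i1 (by positivity)
      _ ≤ z * (μ * μ) := mul_le_mul_of_nonneg_left key n2
      _ = w * (μ * (a + 2 * j + 2 + 1)) := by linear_combination (-μ) * r2

theorem poiTail_ge_sum' (μ : ℝ) (hμ : 0 < μ) (k n : ℕ) :
    ∑ j ∈ Finset.range n, poiPMF μ (k + j) ≤ poiTail μ k := by
  unfold poiTail
  refine Summable.sum_le_tsum _ (fun i _ => poiPMF_nonneg' μ hμ _) ?_
  have := (summable_nat_add_iff k).2 (poiPMF_hasSum' μ).summable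
  simpa [add_comm] using this

theorem poiTail_quarter' (μ : ℝ) (m : ℕ) (hμ : 0 < μ) (hm : 2 ≤ m) (h : (m : ℝ) ≤ μ) :
    1 / 4 ≤ poiTail μ (m + 1) := by
  have e1 := poiTail_eq' μ (m + 1)
  have e0 := poiTail_eq' μ m
  rw [Finset.sum_range_succ] at e1
  have g0 := poiTail_ge_sum' μ hμ m m
  have g1 := poiTail_ge_sum' μ hμ (m + 1) 2
  have hp : ∑ i ∈ Finset.range m, poiPMF μ i ≤ ∑ j ∈ Finset.range m, poiPMF μ (m + j) := by
    rw [← Finset.sum_range_reflect]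
    refine Finset.sum_le_sum fun j hj => ?_
    have hj := Finset.mem_range.1 hj
    obtain ⟨a, rfl⟩ : ∃ a, m = a + j + 1 := ⟨m - 1 - j, by omega⟩
    have := poiPMF_pair' μ hμ j a (by push_cast at h; linarith)
    have e1 : a + j + 1 - 1 - j = a := by omega
    have e2 : a + j + 1 + j = a + 2 * j + 1 := by omega
    rw [e1, e2]
    exact this
  simp only [Finset.sum_range_succ, Finset.sum_range_zero, zero_add, add_zero] at g1
  have r1 := poiPMF_succ' μ m
  have r2 := poiPMF_succ' μ (m + 1)
  push_cast at r2
  have n0 := poiPMF_nonneg' μ hμ m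
  have hm' : (2 : ℝ) ≤ m := by exact_mod_cast hm
  have : poiPMF μ m ≤ poiPMF μ (m + 1) + poiPMF μ (m + 1 + 1) := by
    set x := poiPMF μ m
    set y := poiPMF μ (m + 1)
    set z := poiPMF μ (m + 1 + 1)
    have c : (0 : ℝ) < ((m : ℝ) + 1) * (m + 1 + 1) := by positivity
    refine le_of_mul_le_mul_right ?_ c
    have : (y + z) * (((m : ℝ) + 1) * (m + 1 + 1)) = x * (μ * (m + 1 + 1) + μ * μ) := by
      linear_combination ((m : ℝ) + 1 + 1 + μ) * r1 + ((m : ℝ) + 1) * r2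
    rw [this]
    refine mul_le_mul_of_nonneg_left ?_ n0
    nlinarith
  linarith

theorem poisson_tail_lower_bound_ell_zero
    (μ : ℝ) (k : ℕ) (hμ : 0 < μ) (hk : 0 < k)
    (hkμ : μ ≤ k) (hkμ' : (k : ℝ) < μ + 1) :
    poiTail μ k ≥ 1 / 2 * (μ / (2 * μ + 1)) := by
  have hq : 1 / 2 * (μ / (2 * μ + 1)) ≤ 1 / 4 := by
    have : μ / (2 * μ + 1) ≤ 1 / 2 := by
      rw [div_le_div_iff₀ (by positivity) (by norm_num)]; linarith
    linarith
  obtain ⟨m, rfl⟩ : ∃ m, k = m + 1 := ⟨k - 1, by omega⟩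
  push_cast at hkμ'
  have hm : (m : ℝ) ≤ μ := by linarith
  have e := poiTail_eq' μ (m + 1)
  have hee : Real.exp (-μ) * Real.exp μ = 1 := by
    rw [← Real.exp_add, neg_add_cancel, Real.exp_zero]
  have hpos := Real.exp_pos (-μ)
  rcases m with _ | _ | m
  · simp [poiPMF] at e
    have h1 := Real.add_one_le_exp μ
    have h2 : Real.exp (-μ) * (μ + 1) ≤ 1 := by nlinarith
    have h3 : Real.exp (-μ) ≤ 1 / (μ + 1) := by
      rw [le_div_iff₀ (by positivity)]; exact h2
    have h4 : 1 / 2 * (μ / (2 * μ + 1)) ≤ 1 - 1 / (μ + 1) := by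
      have : 1 - 1 / (μ + 1) = μ / (μ + 1) := by field_simp; ring
      rw [this]
      have : μ / (2 * μ + 1) ≤ μ / (μ + 1) := by gcongr; linarith
      have : 0 ≤ μ / (2 * μ + 1) := by positivity
      linarith
    simp only [zero_add]
    linarith
  · simp [poiPMF, Finset.sum_range_succ] at e
    have h1 : Real.exp 1 * μ ≤ Real.exp μ := by
      have := Real.add_one_le_exp (μ - 1)
      have h : Real.exp μ = Real.exp 1 * Real.exp (μ - 1) := by
        rw [← Real.exp_add]; ring_nf
      rw [h]
      exact mul_le_mul_of_nonneg_left (by linarith) (Real.exp_pos 1).le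
    have h2 := Real.exp_one_gt_d9
    have hm1 : 1 ≤ μ := by simpa using hm
    have h3 : 4 / 3 * (1 + μ) ≤ Real.exp μ := by nlinarith
    have h4 : Real.exp (-μ) * (4 / 3 * (1 + μ)) ≤ 1 := by
      exact (mul_le_mul_of_nonneg_left h3 hpos.le).trans hee.le
    simp only [zero_add, Nat.reduceAdd]
    linarith
  · exact hq.trans (poiTail_quarter' μ (m + 1 + 1) hμ (by omega) hm)
end
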